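/- arXiv:math/0410052 — 2 statements merged into one kernel-verified Lean document; each statement's English description precedes it below -/
import Mathlib

section
/- Let S be a Polish space, c : S × S → [0,∞) satisfy condition (★), (Ω, 𝒜, P) a probability space, ℳ a sub-σ-algebra of 𝒜, and X an S-valued random variable with ∫ c(x, x₀) dP_X(x) < ∞ for some x₀ ∈ S. Assume there exists a random variable U uniformly distributed on [0,1] and independent of σ(X) ∨ ℳ. Let ω ↦ Q_ω be an ℳ-measurable map from Ω to P(S) with ∫_Ω ∫_S c(x, x₀) dQ_ω(x) dP(ω) < ∞. Then there exists a σ(U) ∨ σ(X) ∨ ℳ-measurable random variable Y : Ω → S such that ω ↦ Q_ω is a regular conditional distribution of Y given ℳ and, P-almost surely, E[c(X,Y) | ℳ] = sup_{f ∈ Lip_c} | ∫ f(x) P_{X|ℳ}(dx) − ∫ f(x) Q_·(dx) |. -/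
open MeasureTheory ProbabilityTheory ENNReal Set

noncomputable section

/-- The `μ`-completion of the σ-algebra `m`. -/
def muCompletion {α : Type*} (m : MeasurableSpace α) (μ : @Measure α m) : MeasurableSpace α :=
  letI := m
  inferInstanceAs (MeasurableSpace (MeasureTheory.NullMeasurableSpace α μ))

/-- The universal completion of a σ-algebra: the intersection of the `μ`-completions
over all finite nonnegative measures `μ`. -/
def univCompletion {α : Type*} (m : MeasurableSpace α) : MeasurableSpace α :=
  ⨅ (μ : @Measure α m) (_ : @IsFiniteMeasure α m μ), muCompletion m μ

/-- `Lip_c`: bounded continuous functions `u : S → ℝ` with `|u x - u y| ≤ c x y`. -/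
def LipC {S : Type*} [TopologicalSpace S] (c : S → S → ℝ) : Set (S → ℝ) :=
  {u | Continuous u ∧ (∃ M, ∀ x, |u x| ≤ M) ∧ ∀ x y, |u x - u y| ≤ c x y}

/-- Condition (★): `c x y = sup_{u ∈ Lip_c} |u x - u y|` for all `x, y`. -/
def StarCond {S : Type*} [TopologicalSpace S] (c : S → S → ℝ) : Prop :=
  ∀ x y, c x y = sSup {r : ℝ | ∃ u ∈ LipC c, r = |u x - u y|}

/-- `D(μ,ν)`: couplings of `μ` and `ν`, i.e. probability measures on `S × S`
with first margin `μ` and second margin `ν`. -/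
def Couplings {S : Type*} [MeasurableSpace S] (μ ν : Measure S) : Set (Measure (S × S)) :=
  {π | IsProbabilityMeasure π ∧ π.map Prod.fst = μ ∧ π.map Prod.snd = ν}

/-- The Kantorovich–Rubinštein functional `KR_c(μ,ν)`. -/
def KR {S : Type*} [MeasurableSpace S] (c : S → S → ℝ) (μ ν : Measure S) : ℝ≥0∞ :=
  ⨅ π ∈ Couplings μ ν, ∫⁻ p, ENNReal.ofReal (c p.1 p.2) ∂π

/-- The dual functional `ℓ_c(μ,ν) = sup_{f ∈ Lip_c} |∫ f dμ - ∫ f dν|`. -/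
def lipDist {S : Type*} [TopologicalSpace S] [MeasurableSpace S] (c : S → S → ℝ)
    (μ ν : Measure S) : ℝ≥0∞ :=
  ⨆ u ∈ LipC c, ENNReal.ofReal |∫ x, u x ∂μ - ∫ x, u x ∂ν|

/-- Regular conditional distribution of `Z` given the sub-σ-algebra `M`:
an `M`-measurable family of probability measures `ω ↦ κ ω` such that
`P(A ∩ {Z ∈ B}) = ∫_A κ_ω(B) dP(ω)` for all `A ∈ M` and Borel `B`. -/
def IsRCD {Ω S : Type*} {mΩ : MeasurableSpace Ω} [MeasurableSpace S]
    (P : @Measure Ω mΩ) (M : MeasurableSpace Ω) (Z : Ω → S) (κ : Ω → Measure S) : Prop :=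
  letI := mΩ
  (∀ ω, IsProbabilityMeasure (κ ω)) ∧
  (∀ B : Set S, MeasurableSet B → Measurable[M] (fun ω => κ ω B)) ∧
  (∀ A : Set Ω, MeasurableSet[M] A → ∀ B : Set S, MeasurableSet B →
    P (A ∩ Z ⁻¹' B) = ∫⁻ ω in A, κ ω B ∂P)

/-! For continuous pseudometrics on a compact space, duality comes from the positive extension of
the functional `((f, g), t) ↦ ∫ f dα + ∫ g dβ + t L`, with `f ⊕ g` in place of `(f, g)`, along the
cone of those `(h, t)` with `h + t d ≥ 0`; taking the union of the cones over a directed family of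
`d` gives one coupling that works for the supremum of the family. The increments of countably many
measurable functions become continuous after a measurable embedding into a cube.

Under (★) the cost is the supremum of the increments of countably many `u ∈ Lip_c`. Add to them the
functions `n g(t)` on `T × S`, with `g` injective on `T`: the cost becomes infinite across fibres,
so a single coupling of `μ ⊗ κ` and `μ ⊗ ν` is concentrated on the diagonal of `T` and attains
`∫ ℓ_c(κ_t, ν_t) dμ(t)`, which the lower bound `ℓ_c(κ_t, ν_t)` on each fibre turns into optimality
fibre by fibre. This replaces a measurable selection of optimal couplings. A general conditioning
space reduces to `ℕ → [0, ∞]`, which records the values of the kernels on a countable π-system.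

Disintegrating the optimal couplings over their first margin gives the law that `Y` must have given
`ℳ` and `X`, and `U` is the randomness that realises it. -/

section CompactDuality

lemma exists_between_of_le_add_pseudoMetric {X : Type*} (d : PseudoMetric X ℝ) {f g : X → ℝ}
    (h : ∀ x y, g y ≤ f x + d x y) :
    ∃ φ : X → ℝ, (∀ x y, |φ x - φ y| ≤ d x y) ∧ g ≤ φ ∧ φ ≤ f := by
  have hbdd (y : X) : BddBelow (range fun x => f x + d x y) :=
    ⟨g y, forall_mem_range.2 fun x => h x y⟩
  have hle (y z : X) : ⨅ x, (f x + d x y) ≤ (⨅ x, (f x + d x z)) + d z y := by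
    have : Nonempty X := ⟨y⟩
    rw [← sub_le_iff_le_add]
    refine le_ciInf fun x => sub_le_iff_le_add.2 ?_
    linarith [ciInf_le (hbdd y) x, d.triangle x z y]
  refine ⟨fun y => ⨅ x, (f x + d x y), fun x y => abs_sub_le_iff.2 ⟨?_, ?_⟩, fun y => ?_,
    fun y => ?_⟩
  · linarith [hle x y, d.symm x y]
  · linarith [hle y x]
  · have : Nonempty X := ⟨y⟩
    exact le_ciInf fun x => h x y
  · simpa using ciInf_le (hbdd y) y

lemma continuous_of_abs_sub_le {X : Type*} [TopologicalSpace X] {d : X → X → ℝ}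
    (hd : Continuous fun p : X × X => d p.1 p.2) (hd0 : ∀ x, d x x = 0) {φ : X → ℝ}
    (hφ : ∀ x y, |φ x - φ y| ≤ d x y) : Continuous φ := by
  refine continuous_iff_continuousAt.2 fun x => tendsto_iff_dist_tendsto_zero.2 ?_
  have hdx : Filter.Tendsto (fun y => d y x) (nhds x) (nhds 0) := by
    simpa [Function.comp_def, hd0] using
      (hd.comp (by fun_prop : Continuous fun y => (y, x))).tendsto x
  exact squeeze_zero (fun _ => dist_nonneg) (fun y => hφ y x) hdx

lemma integrable_continuousMap {X : Type*} [TopologicalSpace X] [CompactSpace X]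
    [MeasurableSpace X] [BorelSpace X] (μ : Measure X) [IsFiniteMeasure μ] (f : C(X, ℝ)) :
    Integrable f μ :=
  f.continuous.integrable_of_hasCompactSupport (HasCompactSupport.of_compactSpace f)

/-- Integration against a finite measure, as a linear functional on the continuous functions on a
compact space. -/
def integralFunctional {X : Type*} [TopologicalSpace X] [CompactSpace X] [MeasurableSpace X]
    [BorelSpace X] (μ : Measure X) [IsFiniteMeasure μ] : C(X, ℝ) →ₗ[ℝ] ℝ where
  toFun f := ∫ x, f x ∂μ
  map_add' f g := integral_add (integrable_continuousMap μ f) (integrable_continuousMap μ g)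
  map_smul' r f := integral_const_mul r f

lemma exists_integral_eq_of_nonneg {X : Type*} [TopologicalSpace X] [CompactSpace X] [T2Space X]
    [MeasurableSpace X] [BorelSpace X] (Λ : C(X, ℝ) →ₗ[ℝ] ℝ) (hΛ : ∀ f, 0 ≤ f → 0 ≤ Λ f) :
    ∃ μ : Measure X, IsFiniteMeasure μ ∧ ∀ f : C(X, ℝ), ∫ x, f x ∂μ = Λ f := by
  let Λ' : CompactlySupportedContinuousMap X ℝ →ₚ[ℝ] ℝ :=
    PositiveLinearMap.mk₀
      { toFun := fun f => Λ f
        map_add' := fun f g => Λ.map_add f g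
        map_smul' := fun r f => Λ.map_smul r f }
      fun f hf => hΛ f hf
  exact ⟨RealRMK.rieszMeasure Λ', inferInstance, fun f =>
    RealRMK.integral_rieszMeasure Λ' ⟨f, HasCompactSupport.of_compactSpace _⟩⟩

variable {K I : Type*} [TopologicalSpace K]

/-- The cone of pairs `(h, t)` such that `h + t * d i` is nonnegative for some `i`; a functional
that is nonnegative on it and maps `(0, 1)` to `L` is bounded by `L` on every `d i`. -/
def penaltyCone [Nonempty I] (d : I → PseudoMetric K ℝ) (hd : Directed (· ≤ ·) d) :
    PointedCone ℝ (C(K × K, ℝ) × ℝ) where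
  carrier := {q | 0 ≤ q.2 ∧ ∃ i, ∀ x y, 0 ≤ q.1 (x, y) + q.2 * d i x y}
  zero_mem' := ⟨le_rfl, Classical.arbitrary I, fun x y => by simp⟩
  add_mem' := by
    rintro ⟨h, s⟩ ⟨k, t⟩ ⟨hs, i, hi⟩ ⟨ht, j, hj⟩
    obtain ⟨l, hil, hjl⟩ := hd i j
    refine ⟨add_nonneg hs ht, l, fun x y => ?_⟩
    have hsi := mul_le_mul_of_nonneg_left (hil x y) hs
    have htj := mul_le_mul_of_nonneg_left (hjl x y) ht
    simp only [Prod.mk_add_mk, ContinuousMap.add_apply, add_mul]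
    linarith [hi x y, hj x y]
  smul_mem' := by
    rintro r ⟨h, t⟩ ⟨ht, i, hi⟩
    refine ⟨mul_nonneg r.2 ht, i, fun x y => (mul_nonneg r.2 (hi x y)).trans_eq ?_⟩
    change (r : ℝ) * (h (x, y) + t * d i x y) = (r : ℝ) * h (x, y) + (r : ℝ) * t * d i x y
    ring

/-- The linear map `(f, g) ↦ f ⊕ g`, where `(f ⊕ g)(x, y) = f x + g y`. -/
def outerSum (K : Type*) [TopologicalSpace K] : C(K, ℝ) × C(K, ℝ) →ₗ[ℝ] C(K × K, ℝ) :=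
  (ContinuousMap.compRightAlgHom ℝ ℝ ContinuousMap.fst).toLinearMap.coprod
    (ContinuousMap.compRightAlgHom ℝ ℝ ContinuousMap.snd).toLinearMap

lemma outerSum_apply (f g : C(K, ℝ)) (p : K × K) :
    outerSum K (f, g) p = f p.1 + g p.2 := rfl

variable [CompactSpace K] [MeasurableSpace K] [BorelSpace K] {α β : Measure K}
  [IsProbabilityMeasure α] [IsProbabilityMeasure β]

lemma integral_outerSum [SecondCountableTopology K] (f g : C(K, ℝ)) :
    ∫ p, outerSum K (f, g) p ∂(α.prod β) = ∫ x, f x ∂α + ∫ y, g y ∂β := by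
  have hf := (integrable_continuousMap α f).comp_fst β
  have hg := (integrable_continuousMap β g).comp_snd α
  calc ∫ p, outerSum K (f, g) p ∂(α.prod β) = ∫ p, (f p.1 + g p.2) ∂(α.prod β) := rfl
    _ = ∫ x, f x ∂α + ∫ y, g y ∂β := by
      rw [integral_add hf hg, integral_fun_fst, integral_fun_snd]
      simp

lemma zero_le_integral_add_integral_of_pseudoMetric [SecondCountableTopology K]
    {d : PseudoMetric K ℝ} (hd : Continuous fun p : K × K => d p.1 p.2) {L : ℝ}
    (hL : ∀ φ : C(K, ℝ), (∀ x y, |φ x - φ y| ≤ d x y) → |∫ x, φ x ∂α - ∫ x, φ x ∂β| ≤ L)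
    {f g : C(K, ℝ)} {t : ℝ} (ht : 0 ≤ t) (h : ∀ x y, 0 ≤ f x + g y + t * d x y) :
    0 ≤ ∫ x, f x ∂α + ∫ y, g y ∂β + t * L := by
  obtain rfl | ht := ht.eq_or_lt
  · rw [zero_mul, add_zero, ← integral_outerSum]
    exact integral_nonneg fun p => (by simpa using h p.1 p.2 : 0 ≤ f p.1 + g p.2)
  obtain ⟨φ, hφ, hgφ, hφf⟩ := exists_between_of_le_add_pseudoMetric d
    (f := fun x => f x / t) (g := fun y => -g y / t) fun x y => by
      rw [div_add' _ _ _ ht.ne', div_le_div_iff_of_pos_right ht]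
      linarith [h x y]
  let φ' : C(K, ℝ) := ⟨φ, continuous_of_abs_sub_le hd (fun _ => d.refl _) hφ⟩
  have hα : t * ∫ x, φ x ∂α ≤ ∫ x, f x ∂α := by
    rw [← integral_const_mul]
    exact integral_mono ((integrable_continuousMap α φ').const_mul t)
      (integrable_continuousMap α f) fun x => (le_div_iff₀' ht).1 (hφf x)
  have hβ : -(t * ∫ y, φ y ∂β) ≤ ∫ y, g y ∂β := by
    rw [← integral_const_mul, ← integral_neg]
    exact integral_mono ((integrable_continuousMap β φ').const_mul t).neg
      (integrable_continuousMap β g) fun y => neg_le.1 ((div_le_iff₀' ht).1 (hgφ y))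
  have hαβ := mul_le_mul_of_nonneg_left (neg_le_of_abs_le (hL φ' hφ)) ht.le
  simp only [φ', ContinuousMap.coe_mk] at hαβ
  linarith

variable [SecondCountableTopology K] [Nonempty I] {d : I → PseudoMetric K ℝ} {L : ℝ}

lemma exists_functional_of_directed (hd : Directed (· ≤ ·) d)
    (hcont : ∀ i, Continuous fun p : K × K => d i p.1 p.2)
    (hL : ∀ i, ∀ φ : C(K, ℝ), (∀ x y, |φ x - φ y| ≤ d i x y) →
      |∫ x, φ x ∂α - ∫ x, φ x ∂β| ≤ L) :
    ∃ Λ : C(K × K, ℝ) →ₗ[ℝ] ℝ, (∀ h, 0 ≤ h → 0 ≤ Λ h) ∧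
      (∀ f g, Λ (outerSum K (f, g)) = ∫ x, f x ∂α + ∫ y, g y ∂β) ∧
      ∀ i, Λ ⟨fun p => d i p.1 p.2, hcont i⟩ ≤ L := by
  let F : C(K × K, ℝ) × ℝ →ₗ[ℝ] ℝ :=
    (integralFunctional (α.prod β)).coprod (LinearMap.toSpanSingleton ℝ ℝ L)
  have hF (f g : C(K, ℝ)) (t : ℝ) :
      F (outerSum K (f, g), t) = ∫ x, f x ∂α + ∫ y, g y ∂β + t * L :=
    congrArg (· + t * L) (integral_outerSum f g)
  let W : Submodule ℝ (C(K × K, ℝ) × ℝ) := ((outerSum K).prodMap LinearMap.id).range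
  obtain ⟨G, hGF, hG⟩ := riesz_extension (penaltyCone d hd) (F.toPMap W)
    (by
      rintro ⟨-, ⟨⟨f, g⟩, t⟩, rfl⟩ ⟨ht, i, hi⟩
      exact (zero_le_integral_add_integral_of_pseudoMetric (hcont i) (hL i) ht hi).trans_eq
        (hF f g t).symm)
    (by
      rintro ⟨h, t⟩
      refine ⟨⟨(outerSum K (.const K ‖h‖, 0), -t), ⟨((_, _), _), rfl⟩⟩,
        (neg_add_cancel t).ge, Classical.arbitrary I, fun x y => ?_⟩
      simpa [outerSum_apply, neg_le_iff_add_nonneg'] using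
        neg_le_of_abs_le (h.norm_coe_le_norm (x, y)))
  have hGW (f g : C(K, ℝ)) (t : ℝ) :
      G (outerSum K (f, g), t) = ∫ x, f x ∂α + ∫ y, g y ∂β + t * L :=
    (hGF ⟨(outerSum K (f, g), t), ⟨((f, g), t), rfl⟩⟩).trans (hF f g t)
  refine ⟨G ∘ₗ LinearMap.inl ℝ _ _, fun h hh => hG _ ⟨le_rfl, Classical.arbitrary I, fun x y => ?_⟩,
    fun f g => by simpa using hGW f g 0, fun i => ?_⟩
  · simpa using hh (x, y)
  · have hpos : 0 ≤ G (-⟨fun p => d i p.1 p.2, hcont i⟩, 1) :=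
      hG _ ⟨zero_le_one, i, fun x y => by simp⟩
    have hone : G (0, 1) = L := by simpa [Prod.mk_zero_zero] using hGW 0 0 1
    have : G (-⟨fun p => d i p.1 p.2, hcont i⟩, 1) =
        G (0, 1) - G (⟨fun p => d i p.1 p.2, hcont i⟩, 0) := by
      rw [← map_sub]; simp
    simp only [LinearMap.comp_apply, LinearMap.inl_apply]
    linarith

lemma exists_coupling_of_directed_pseudoMetric [T2Space K] (hd : Directed (· ≤ ·) d)
    (hcont : ∀ i, Continuous fun p : K × K => d i p.1 p.2)
    (hL : ∀ i, ∀ φ : C(K, ℝ), (∀ x y, |φ x - φ y| ≤ d i x y) →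
      |∫ x, φ x ∂α - ∫ x, φ x ∂β| ≤ L) :
    ∃ π ∈ Couplings α β, ∀ i, ∫ p, d i p.1 p.2 ∂π ≤ L := by
  obtain ⟨Λ, hpos, hmarg, hΛL⟩ := exists_functional_of_directed hd hcont hL
  obtain ⟨π, hπ, hπΛ⟩ := exists_integral_eq_of_nonneg Λ hpos
  have hfst : π.map Prod.fst = α := by
    refine ext_of_forall_integral_eq_of_IsFiniteMeasure fun f => ?_
    rw [integral_map (by fun_prop) f.continuous.aestronglyMeasurable]
    simpa only [outerSum_apply, ContinuousMap.zero_apply, add_zero, zero_add, integral_zero]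
      using! (hπΛ (outerSum K (f.toContinuousMap, 0))).trans (hmarg _ _)
  have hsnd : π.map Prod.snd = β := by
    refine ext_of_forall_integral_eq_of_IsFiniteMeasure fun f => ?_
    rw [integral_map (by fun_prop) f.continuous.aestronglyMeasurable]
    simpa only [outerSum_apply, ContinuousMap.zero_apply, add_zero, zero_add, integral_zero]
      using! (hπΛ (outerSum K (0, f.toContinuousMap))).trans (hmarg _ _)
  have hprob : IsProbabilityMeasure (π.map Prod.fst) := hfst ▸ inferInstance
  exact ⟨π, ⟨(Measure.isProbabilityMeasure_map_iff (by fun_prop)).1 hprob, hfst, hsnd⟩,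
    fun i => (hπΛ _).trans_le (hΛL i)⟩

lemma exists_coupling_lintegral_iSup_pseudoMetric_le [T2Space K] [Countable I]
    (hd : Directed (· ≤ ·) d) (hcont : ∀ i, Continuous fun p : K × K => d i p.1 p.2)
    (hL : ∀ i, ∀ φ : C(K, ℝ), (∀ x y, |φ x - φ y| ≤ d i x y) →
      |∫ x, φ x ∂α - ∫ x, φ x ∂β| ≤ L) :
    ∃ π ∈ Couplings α β, ∫⁻ p, ⨆ i, ENNReal.ofReal (d i p.1 p.2) ∂π ≤ ENNReal.ofReal L := by
  obtain ⟨π, hπ, hπL⟩ := exists_coupling_of_directed_pseudoMetric hd hcont hL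
  have := hπ.1
  refine ⟨π, hπ, ?_⟩
  rw [lintegral_iSup_directed (fun i => (hcont i).measurable.ennreal_ofReal.aemeasurable)
    fun i j => (hd i j).imp fun k hk =>
      ⟨fun p => ENNReal.ofReal_le_ofReal (hk.1 p.1 p.2),
        fun p => ENNReal.ofReal_le_ofReal (hk.2 p.1 p.2)⟩]
  refine iSup_le fun i => ?_
  have hint : Integrable (fun p => d i p.1 p.2) π :=
    integrable_continuousMap π ⟨_, hcont i⟩
  rw [← ofReal_integral_eq_lintegral_ofReal hint (ae_of_all _ fun p => (d i).nonneg p.1 p.2)]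
  exact ENNReal.ofReal_le_ofReal (hπL i)

end CompactDuality

section BorelDuality

/-- The pseudometric `|f x - f y|` of the increments of a real function `f`. -/
def incrementDist {Z : Type*} (f : Z → ℝ) : PseudoMetric Z ℝ where
  toFun x y := |f x - f y|
  refl' x := by simp
  symm' x y := abs_sub_comm _ _
  triangle' x y z := abs_sub_le _ _ _

lemma incrementDist_apply {Z : Type*} (f : Z → ℝ) (x y : Z) :
    incrementDist f x y = |f x - f y| := rfl

lemma finsetSup_pseudoMetric_le {Z ι : Type*} {d : ι → PseudoMetric Z ℝ} {F : Finset ι} {x y : Z}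
    {r : ℝ} (hr : 0 ≤ r) (h : ∀ i ∈ F, d i x y ≤ r) : F.sup d x y ≤ r :=
  Finset.sup_induction (p := fun e : PseudoMetric Z ℝ => e x y ≤ r) hr
    (fun _ he _ he' => sup_le he he') h

lemma continuous_finsetSup_pseudoMetric {Y Z ι : Type*} [TopologicalSpace Y]
    {d : ι → PseudoMetric Z ℝ} {F : Finset ι} {g h : Y → Z}
    (hd : ∀ i ∈ F, Continuous fun y => d i (g y) (h y)) :
    Continuous fun y => F.sup d (g y) (h y) :=
  Finset.sup_induction (p := fun e : PseudoMetric Z ℝ => Continuous fun y => e (g y) (h y))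
    continuous_const (fun _ he _ he' => he.max he') hd

lemma comap_prodMap_mem_couplings {Z K : Type*} [MeasurableSpace Z] [MeasurableSpace K]
    {Φ : Z → K} (hΦ : MeasurableEmbedding Φ) {α β : Measure Z} {π : Measure (K × K)}
    (hπ : π ∈ Couplings (α.map Φ) (β.map Φ)) :
    π.comap (Prod.map Φ Φ) ∈ Couplings α β ∧
      (π.comap (Prod.map Φ Φ)).map (Prod.map Φ Φ) = π := by
  obtain ⟨hπ, hfst, hsnd⟩ := hπ
  have hΦΦ := hΦ.prodMap hΦ
  have hrange (μ : Measure Z) : ∀ᵐ k ∂(μ.map Φ), k ∈ range Φ :=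
    (ae_map_iff hΦ.measurable.aemeasurable hΦ.measurableSet_range).2 (ae_of_all _ mem_range_self)
  have hmap : (π.comap (Prod.map Φ Φ)).map (Prod.map Φ Φ) = π := by
    rw [hΦΦ.map_comap, Measure.restrict_eq_self_of_ae_mem]
    filter_upwards [ae_of_ae_map measurable_fst.aemeasurable (hfst ▸ hrange α),
      ae_of_ae_map measurable_snd.aemeasurable (hsnd ▸ hrange β)] with p hp hp'
    exact range_prodMap ▸ ⟨hp, hp'⟩
  have hinj {μ ν : Measure Z} (h : μ.map Φ = ν.map Φ) : μ = ν := by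
    rw [← hΦ.comap_map μ, h, hΦ.comap_map]
  refine ⟨⟨(Measure.isProbabilityMeasure_map_iff hΦΦ.measurable.aemeasurable).1
    (hmap.symm ▸ hπ), hinj ?_, hinj ?_⟩, hmap⟩
  · rw [← hfst, Measure.map_map hΦ.measurable measurable_fst, ← Prod.map_fst',
      ← Measure.map_map measurable_fst hΦΦ.measurable, hmap]
  · rw [← hsnd, Measure.map_map hΦ.measurable measurable_snd, ← Prod.map_snd',
      ← Measure.map_map measurable_snd hΦΦ.measurable, hmap]

lemma exists_measurableEmbedding_continuous_coordinates {Z ι : Type*} [MeasurableSpace Z]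
    [StandardBorelSpace Z] [Countable ι] {v : ι → Z → ℝ} (hv : ∀ i, Measurable (v i))
    {b : ι → ℝ} (hb : ∀ i z, |v i z| ≤ b i) :
    ∃ (Φ : Z → (∀ i, Icc (-b i) (b i)) × (ℕ → Bool)), MeasurableEmbedding Φ ∧
      ∀ i z, ((Φ z).1 i : ℝ) = v i z :=
  ⟨fun z => (fun i => ⟨v i z, abs_le.1 (hb i z)⟩, MeasurableSpace.mapNatBool Z z),
    ((measurable_pi_lambda (fun z i => (⟨v i z, abs_le.1 (hb i z)⟩ : Icc (-b i) (b i)))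
      fun i => (hv i).subtype_mk).prodMk
      (MeasurableSpace.measurable_mapNatBool Z)).measurableEmbedding fun _ _ h =>
        MeasurableSpace.injective_mapNatBool Z (congrArg Prod.snd h), fun _ _ => rfl⟩

lemma exists_coupling_lintegral_iSup_increment_le {Z ι : Type*} [MeasurableSpace Z]
    [StandardBorelSpace Z] [Countable ι] {v : ι → Z → ℝ} (hv : ∀ i, Measurable (v i))
    {b : ι → ℝ} (hb : ∀ i z, |v i z| ≤ b i) {α β : Measure Z} [IsProbabilityMeasure α]
    [IsProbabilityMeasure β] {L : ℝ}
    (hL : ∀ (F : Finset ι) (φ : Z → ℝ), Measurable φ → (∃ C, ∀ z, |φ z| ≤ C) →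
      (∀ z z', |φ z - φ z'| ≤ F.sup (fun i => incrementDist (v i)) z z') →
      |∫ z, φ z ∂α - ∫ z, φ z ∂β| ≤ L) :
    ∃ π ∈ Couplings α β,
      ∫⁻ p, ⨆ i, ENNReal.ofReal |v i p.1 - v i p.2| ∂π ≤ ENNReal.ofReal L := by
  obtain ⟨Φ, hΦ, hΦv⟩ := exists_measurableEmbedding_continuous_coordinates hv hb
  have := Measure.isProbabilityMeasure_map (μ := α) hΦ.measurable.aemeasurable
  have := Measure.isProbabilityMeasure_map (μ := β) hΦ.measurable.aemeasurable
  let d (F : Finset ι) : PseudoMetric ((∀ i, Icc (-b i) (b i)) × (ℕ → Bool)) ℝ :=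
    F.sup fun i => incrementDist fun k => k.1 i
  have hdΦ (F : Finset ι) (z z' : Z) :
      d F (Φ z) (Φ z') ≤ F.sup (fun i => incrementDist (v i)) z z' :=
    finsetSup_pseudoMetric_le (PseudoMetric.nonneg _ _ _) fun i hi => by
      simpa only [incrementDist_apply, hΦv] using
        Finset.le_sup (f := fun i => incrementDist (v i)) hi z z'
  have hcont (F : Finset ι) : Continuous fun p : _ × _ => d F p.1 p.2 :=
    continuous_finsetSup_pseudoMetric fun i _ => by
      simp only [incrementDist_apply]
      fun_prop
  obtain ⟨π, hπ, hπL⟩ := exists_coupling_lintegral_iSup_pseudoMetric_le (d := d)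
    (α := α.map Φ) (β := β.map Φ) (L := L)
    (Monotone.directed_le fun _ _ hFG => Finset.sup_mono hFG) hcont fun F φ hφ => by
      rw [integral_map hΦ.measurable.aemeasurable φ.continuous.aestronglyMeasurable,
        integral_map hΦ.measurable.aemeasurable φ.continuous.aestronglyMeasurable]
      exact hL F (φ ∘ Φ) (φ.continuous.measurable.comp hΦ.measurable)
        ⟨‖φ‖, fun z => φ.norm_coe_le_norm (Φ z)⟩ fun z z' => (hφ _ _).trans (hdΦ F z z')
  obtain ⟨hπ', hmap⟩ := comap_prodMap_mem_couplings hΦ hπ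
  refine ⟨_, hπ', le_trans ?_ hπL⟩
  nth_rewrite 2 [← hmap]
  rw [(hΦ.prodMap hΦ).lintegral_map]
  refine lintegral_mono fun p => iSup_le fun i => le_iSup_of_le {i} (le_of_eq ?_)
  simp [d, incrementDist_apply, hΦv]

end BorelDuality

section Cost

variable {S : Type*} [TopologicalSpace S] {c : S → S → ℝ}

namespace StarCond

lemma nonneg (hc : StarCond c) (x y : S) : 0 ≤ c x y := by
  rw [hc x y]
  exact Real.sSup_nonneg (by rintro _ ⟨u, -, rfl⟩; exact abs_nonneg _)

lemma symm (hc : StarCond c) (x y : S) : c x y = c y x := by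
  simp only [hc x y, hc y x, abs_sub_comm]

lemma lipC_nonempty (hc : StarCond c) : (LipC c).Nonempty :=
  ⟨0, continuous_zero, ⟨0, by simp⟩, by simpa using hc.nonneg⟩

lemma isLUB (hc : StarCond c) (x y : S) : IsLUB ((fun u => |u x - u y|) '' LipC c) (c x y) := by
  have hsSup : c x y = sSup ((fun u => |u x - u y|) '' LipC c) := by
    simpa only [image, eq_comm] using hc x y
  rw [hsSup]
  exact isLUB_csSup (hc.lipC_nonempty.image _) ⟨c x y, forall_mem_image.2 fun u hu => hu.2.2 x y⟩

lemma triangle (hc : StarCond c) (x y z : S) : c x z ≤ c x y + c y z :=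
  (hc.isLUB x z).2 <| forall_mem_image.2 fun u hu =>
    (abs_sub_le _ (u y) _).trans (add_le_add (hu.2.2 x y) (hu.2.2 y z))

lemma isLUB_ofReal (hc : StarCond c) :
    IsLUB ((fun u (p : S × S) => ENNReal.ofReal |u p.1 - u p.2|) '' LipC c)
      fun p => ENNReal.ofReal (c p.1 p.2) := by
  refine isLUB_pi.2 fun p => ?_
  simpa only [image_image] using (hc.isLUB p.1 p.2).isLUB_of_tendsto
    (ENNReal.ofReal_mono.monotoneOn _) (hc.lipC_nonempty.image _)
    ENNReal.continuous_ofReal.continuousWithinAt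

lemma exists_countable_iSup_ofReal [SecondCountableTopology S] (hc : StarCond c) :
    ∃ V ⊆ LipC c, V.Countable ∧
      ∀ x y, ENNReal.ofReal (c x y) = ⨆ u : V, ENNReal.ofReal |u.1 x - u.1 y| := by
  obtain ⟨_, hsub, hcount, hlub⟩ := exists_countable_lowerSemicontinuous_isLUB
    (forall_mem_image.2 fun u hu => by
      have := hu.1
      exact (ENNReal.continuous_ofReal.comp (by fun_prop)).lowerSemicontinuous) hc.isLUB_ofReal
  obtain ⟨V, hV, hinj, rfl⟩ := SurjOn.exists_subset_injOn_image_eq hsub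
  refine ⟨V, hV, countable_of_injective_of_countable_image hinj hcount, fun x y => ?_⟩
  simpa only [image_image, sSup_image'] using (isLUB_pi.1 hlub (x, y)).sSup_eq.symm

lemma measurable_ofReal [SecondCountableTopology S] [MeasurableSpace S] [BorelSpace S]
    (hc : StarCond c) : Measurable fun p : S × S => ENNReal.ofReal (c p.1 p.2) := by
  obtain ⟨V, hV, hcount, hsup⟩ := hc.exists_countable_iSup_ofReal
  have := hcount.to_subtype
  simp only [hsup]
  refine Measurable.iSup fun u => ?_
  have := (hV u.2).1.measurable
  fun_prop

end StarCond

section Measure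

variable [MeasurableSpace S] [BorelSpace S]

lemma integrable_of_mem_lipC {u : S → ℝ} (hu : u ∈ LipC c) (μ : Measure S) [IsFiniteMeasure μ] :
    Integrable u μ := by
  obtain ⟨C, hC⟩ := hu.2.1
  exact .of_bound hu.1.measurable.aestronglyMeasurable C (ae_of_all _ hC)

lemma lipDist_map_fst_map_snd_le (c : S → S → ℝ) (ρ : Measure (S × S)) [IsFiniteMeasure ρ] :
    lipDist c (ρ.map Prod.fst) (ρ.map Prod.snd) ≤ ∫⁻ p, ENNReal.ofReal (c p.1 p.2) ∂ρ := by
  refine iSup₂_le fun u hu => ?_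
  have hfst := (integrable_of_mem_lipC hu (ρ.map Prod.fst)).comp_measurable measurable_fst
  have hsnd := (integrable_of_mem_lipC hu (ρ.map Prod.snd)).comp_measurable measurable_snd
  calc ENNReal.ofReal |∫ x, u x ∂(ρ.map Prod.fst) - ∫ x, u x ∂(ρ.map Prod.snd)|
      = ‖∫ p, u p.1 - u p.2 ∂ρ‖ₑ := by
        rw [integral_map measurable_fst.aemeasurable hu.1.measurable.aestronglyMeasurable,
          integral_map measurable_snd.aemeasurable hu.1.measurable.aestronglyMeasurable,
          ← Real.enorm_eq_ofReal_abs]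
        exact congrArg _ (integral_sub hfst hsnd).symm
    _ ≤ ∫⁻ p, ‖u p.1 - u p.2‖ₑ ∂ρ := enorm_integral_le_lintegral_enorm _
    _ ≤ ∫⁻ p, ENNReal.ofReal (c p.1 p.2) ∂ρ := lintegral_mono fun p => by
        rw [Real.enorm_eq_ofReal_abs]
        exact ENNReal.ofReal_le_ofReal (hu.2.2 p.1 p.2)

lemma StarCond.lipDist_le_lintegral_add_lintegral [SecondCountableTopology S]
    (hc : StarCond c) (x₀ : S) (μ ν : Measure S)
    [IsProbabilityMeasure μ] [IsProbabilityMeasure ν] :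
    lipDist c μ ν ≤
      ∫⁻ x, ENNReal.ofReal (c x x₀) ∂μ + ∫⁻ x, ENNReal.ofReal (c x x₀) ∂ν := by
  calc lipDist c μ ν
      = lipDist c ((μ.prod ν).map Prod.fst) ((μ.prod ν).map Prod.snd) := by
        simp only [Measure.map_fst_prod, Measure.map_snd_prod, measure_univ, one_smul]
    _ ≤ ∫⁻ p, ENNReal.ofReal (c p.1 p.2) ∂(μ.prod ν) := lipDist_map_fst_map_snd_le c _
    _ ≤ ∫⁻ p, ENNReal.ofReal (c p.1 x₀) + ENNReal.ofReal (c p.2 x₀) ∂(μ.prod ν) :=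
        lintegral_mono fun p => by
          rw [hc.symm p.2, ← ENNReal.ofReal_add (hc.nonneg _ _) (hc.nonneg _ _)]
          exact ENNReal.ofReal_le_ofReal (hc.triangle _ _ _)
    _ = ∫⁻ x, ENNReal.ofReal (c x x₀) ∂μ + ∫⁻ x, ENNReal.ofReal (c x x₀) ∂ν := by
        have hm : Measurable fun x => ENNReal.ofReal (c x x₀) :=
          hc.measurable_ofReal.comp (measurable_id.prodMk measurable_const)
        exact (lintegral_add_left (hm.comp measurable_fst) _).trans <| congrArg₂ _
          (measurePreserving_fst.lintegral_comp hm) (measurePreserving_snd.lintegral_comp hm)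

end Measure

end Cost

section FiberwiseDuality

variable {S T : Type*}

/-- Test functions on `T × S` for the cost that is `sup_{u ∈ V} |u x - u y|` within the fibre over
a point of `T` and infinite between the fibres: functions of the second coordinate in `V`, together
with all multiples of a function `g` separating the points of `T`. -/
def fiberTest (V : Set (S → ℝ)) (g : T → ℝ) : V ⊕ ℕ → T × S → ℝ :=
  Sum.elim (fun u z => u.1 z.2) fun n z => n * g z.1

lemma exists_measurable_injective_abs_le_one (T : Type*) [MeasurableSpace T]
    [StandardBorelSpace T] :
    ∃ g : T → ℝ, Measurable g ∧ Function.Injective g ∧ ∀ t, |g t| ≤ 1 := by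
  have hemb := measurableEmbedding_sigmoid_comp_embeddingReal T
  refine ⟨fun t => unitInterval.sigmoid (embeddingReal T t), hemb.measurable.subtype_val,
    Subtype.val_injective.comp hemb.injective, fun t => ?_⟩
  rw [abs_of_nonneg (unitInterval.nonneg _)]
  exact unitInterval.le_one _

lemma eq_of_iSup_ofReal_abs_nat_mul_sub_ne_top {a b : ℝ}
    (h : ⨆ n : ℕ, ENNReal.ofReal |n * a - n * b| ≠ ⊤) : a = b := by
  by_contra hab
  obtain ⟨n, hn⟩ := ENNReal.exists_nat_mul_gt
    (ENNReal.ofReal_pos.2 (abs_pos.2 (sub_ne_zero.2 hab))).ne' h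
  refine absurd (le_iSup (fun n : ℕ => ENNReal.ofReal |n * a - n * b|) n) (not_le.2 ?_)
  simpa only [← mul_sub, abs_mul, Nat.abs_cast, ENNReal.ofReal_mul n.cast_nonneg,
    ENNReal.ofReal_natCast] using hn

variable [TopologicalSpace S] {c : S → S → ℝ}

lemma slice_mem_lipC_of_abs_sub_le_fiberTest {V : Set (S → ℝ)} (hV : V ⊆ LipC c)
    (hc : ∀ x y, 0 ≤ c x y) {g : T → ℝ} {F : Finset (V ⊕ ℕ)} {φ : T × S → ℝ}
    (hφb : ∃ C, ∀ z, |φ z| ≤ C)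
    (hφ : ∀ z z', |φ z - φ z'| ≤ F.sup (fun i => incrementDist (fiberTest V g i)) z z') (t : T) :
    (fun x => φ (t, x)) ∈ LipC c := by
  have hle (x y : S) : F.sup (fun i => incrementDist (fiberTest V g i)) (t, x) (t, y) ≤ c x y := by
    refine finsetSup_pseudoMetric_le (hc x y) ?_
    rintro (u | n) -
    · exact (hV u.2).2.2 x y
    · simpa [incrementDist_apply, fiberTest] using hc x y
  have hcont : Continuous fun x => φ (t, x) := by
    refine continuous_of_abs_sub_le
      (d := fun x y => F.sup (fun i => incrementDist (fiberTest V g i)) (t, x) (t, y))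
      (continuous_finsetSup_pseudoMetric ?_) (fun x => PseudoMetric.refl _ _)
      fun x y => hφ (t, x) (t, y)
    rintro (u | n) _
    · have := (hV u.2).1
      simp only [incrementDist_apply, fiberTest, Sum.elim_inl]
      fun_prop
    · simp only [incrementDist_apply, fiberTest, Sum.elim_inr]
      fun_prop
  exact ⟨hcont, hφb.imp fun C hC x => hC _, fun x y => (hφ _ _).trans (hle x y)⟩

variable [MeasurableSpace S] [MeasurableSpace T] {μ : Measure T} {κ ν : Kernel T S}

lemma abs_integral_compProd_sub_le [IsFiniteMeasure μ] [IsFiniteKernel κ] [IsFiniteKernel ν]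
    (hfin : ∫⁻ t, lipDist c (κ t) (ν t) ∂μ ≠ ⊤) {φ : T × S → ℝ} (hφm : Measurable φ)
    (hφb : ∃ C, ∀ z, |φ z| ≤ C) (hφ : ∀ t, (fun x => φ (t, x)) ∈ LipC c) :
    |∫ z, φ z ∂(μ ⊗ₘ κ) - ∫ z, φ z ∂(μ ⊗ₘ ν)| ≤ (∫⁻ t, lipDist c (κ t) (ν t) ∂μ).toReal := by
  obtain ⟨C, hC⟩ := hφb
  have hint (η : Kernel T S) [IsFiniteKernel η] : Integrable φ (μ ⊗ₘ η) :=
    .of_bound hφm.aestronglyMeasurable C (ae_of_all _ hC)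
  have hint' (η : Kernel T S) [IsFiniteKernel η] : Integrable (fun t => ∫ x, φ (t, x) ∂(η t)) μ :=
    (hint η).integral_compProd
  rw [Measure.integral_compProd (hint κ), Measure.integral_compProd (hint ν),
    ← integral_sub (hint' κ) (hint' ν), ← Real.norm_eq_abs]
  refine (norm_integral_le_lintegral_norm _).trans
    (ENNReal.toReal_mono hfin (lintegral_mono fun t => ?_))
  exact le_iSup₂ (f := fun u (_ : u ∈ LipC c) =>
    ENNReal.ofReal |∫ x, u x ∂(κ t) - ∫ x, u x ∂(ν t)|) _ (hφ t)

variable [PolishSpace S] [BorelSpace S] [StandardBorelSpace T] [IsProbabilityMeasure μ]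
  [IsMarkovKernel κ] [IsMarkovKernel ν]

lemma StarCond.exists_fiberwise_coupling (hc : StarCond c)
    (hfin : ∫⁻ t, lipDist c (κ t) (ν t) ∂μ ≠ ⊤) :
    ∃ π ∈ Couplings (μ ⊗ₘ κ) (μ ⊗ₘ ν), (∀ᵐ p ∂π, p.1.1 = p.2.1) ∧
      ∫⁻ p, ENNReal.ofReal (c p.1.2 p.2.2) ∂π ≤ ∫⁻ t, lipDist c (κ t) (ν t) ∂μ := by
  obtain ⟨V, hV, hcount, hsup⟩ := hc.exists_countable_iSup_ofReal
  have := hcount.to_subtype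
  obtain ⟨g, hg, hginj, hgb⟩ := exists_measurable_injective_abs_le_one T
  have hv : ∀ i, Measurable (fiberTest V g i) := by
    rintro (u | n)
    · exact (hV u.2).1.measurable.comp measurable_snd
    · exact (hg.comp measurable_fst).const_mul _
  have hb : ∀ i, ∃ b, ∀ z, |fiberTest V g i z| ≤ b := by
    rintro (u | n)
    · exact (hV u.2).2.1.imp fun C hC z => hC z.2
    · exact ⟨n, fun z => by
        simpa [fiberTest, abs_mul] using mul_le_of_le_one_right n.cast_nonneg (hgb z.1)⟩
  choose b hb using hb
  obtain ⟨π, hπ, hle⟩ := exists_coupling_lintegral_iSup_increment_le hv hb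
    fun F φ hφm hφb hφ => abs_integral_compProd_sub_le hfin hφm hφb
      (slice_mem_lipC_of_abs_sub_le_fiberTest hV hc.nonneg hφb hφ)
  rw [ENNReal.ofReal_toReal hfin] at hle
  refine ⟨π, hπ, ?_, (lintegral_mono fun p => ?_).trans hle⟩
  · have hfinite := ae_lt_top (Measurable.iSup fun i => by
      have := hv i
      fun_prop) (hle.trans_lt hfin.lt_top).ne
    filter_upwards [hfinite] with p hp
    refine hginj (eq_of_iSup_ofReal_abs_nat_mul_sub_ne_top (ne_top_of_le_ne_top hp.ne ?_))
    exact iSup_le fun n => le_iSup (fun i => ENNReal.ofReal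
      |fiberTest V g i p.1 - fiberTest V g i p.2|) (Sum.inr n)
  · rw [hsup]
    exact iSup_le fun u => le_iSup (fun i => ENNReal.ofReal
      |fiberTest V g i p.1 - fiberTest V g i p.2|) (Sum.inl u)

lemma StarCond.exists_measure_compProd (hc : StarCond c)
    (hfin : ∫⁻ t, lipDist c (κ t) (ν t) ∂μ ≠ ⊤) :
    ∃ ρ : Measure ((T × S) × S), ρ.fst = μ ⊗ₘ κ ∧ ρ.map (fun p => (p.1.1, p.2)) = μ ⊗ₘ ν ∧
      ∫⁻ p, ENNReal.ofReal (c p.1.2 p.2) ∂ρ ≤ ∫⁻ t, lipDist c (κ t) (ν t) ∂μ := by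
  obtain ⟨π, ⟨-, hfst, hsnd⟩, hfiber, hcost⟩ := hc.exists_fiberwise_coupling hfin
  have hm : Measurable fun p : (T × S) × (T × S) => (p.1, p.2.2) := by fun_prop
  refine ⟨π.map fun p => (p.1, p.2.2), ?_, ?_, ?_⟩
  · rw [Measure.fst, Measure.map_map measurable_fst hm, ← hfst]
    rfl
  · rw [Measure.map_map (by fun_prop) hm, ← hsnd]
    exact Measure.map_congr (hfiber.mono fun p hp => Prod.ext hp rfl)
  · exact (lintegral_map_le _ _).trans hcost

end FiberwiseDuality

section OptimalKernel

variable {S E : Type*} [MeasurableSpace E]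

lemma exists_isPiSystem_range_generateFrom (S : Type*) [mS : MeasurableSpace S]
    [MeasurableSpace.CountablyGenerated S] :
    ∃ B : ℕ → Set S, IsPiSystem (range B) ∧ mS = MeasurableSpace.generateFrom (range B) := by
  let 𝒜 := generateSetAlgebra (MeasurableSpace.countableGeneratingSet S)
  have halg : IsSetAlgebra 𝒜 := isSetAlgebra_generateSetAlgebra
  obtain ⟨B, hB⟩ := (countable_generateSetAlgebra
    MeasurableSpace.countable_countableGeneratingSet).exists_eq_range ⟨univ, halg.univ_mem⟩
  refine ⟨B, hB ▸ fun s hs t ht _ => halg.inter_mem hs ht, ?_⟩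
  rw [← hB, generateFrom_generateSetAlgebra_eq, MeasurableSpace.generateFrom_countableGeneratingSet]

lemma exists_kernel_comap_ae_eq [MeasurableSpace S] [StandardBorelSpace S] (μ : Measure E)
    [IsProbabilityMeasure μ] (κ : Kernel E S) [IsMarkovKernel κ] :
    ∃ (τ : E → ℕ → ℝ≥0∞) (_ : Measurable τ) (θ : Kernel (ℕ → ℝ≥0∞) S), IsMarkovKernel θ ∧
      ∀ᵐ t ∂μ, κ t = θ (τ t) := by
  obtain ⟨B, hpi, hgen⟩ := exists_isPiSystem_range_generateFrom S
  have hB (n : ℕ) : MeasurableSet (B n) :=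
    hgen ▸ MeasurableSpace.measurableSet_generateFrom (mem_range_self n)
  have : Nonempty S := μ.nonempty_of_neZero.elim fun t => (κ t).nonempty_of_neZero
  let τ : E → ℕ → ℝ≥0∞ := fun t n => κ t (B n)
  have hτ : Measurable τ := measurable_pi_lambda _ fun n => κ.measurable_coe (hB n)
  have hτid : Measurable (Prod.map τ (id : S → S)) := hτ.prodMap measurable_id
  let ρ := (μ ⊗ₘ κ).map (Prod.map τ id)
  have hfst : ρ.fst = μ.map τ := calc
    ρ.fst = (μ ⊗ₘ κ).map (τ ∘ Prod.fst) := Measure.map_map measurable_fst hτid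
    _ = ((μ ⊗ₘ κ).fst).map τ := (Measure.map_map hτ measurable_fst).symm
    _ = μ.map τ := by rw [Measure.fst_compProd]
  have hcoord (n : ℕ) : ∀ᵐ t ∂μ, κ t (B n) = ρ.condKernel (τ t) (B n) := by
    refine ae_of_ae_map hτ.aemeasurable (p := fun s => s n = ρ.condKernel s (B n))
      (ae_eq_of_forall_setLIntegral_eq_of_sigmaFinite (measurable_pi_apply n)
        (ρ.condKernel.measurable_coe (hB n)) fun A hA _ => ?_)
    calc ∫⁻ s in A, s n ∂(μ.map τ) = ∫⁻ t in τ ⁻¹' A, κ t (B n) ∂μ :=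
          setLIntegral_map hA (measurable_pi_apply n) hτ
      _ = (μ ⊗ₘ κ) ((τ ⁻¹' A) ×ˢ B n) := (Measure.compProd_apply_prod (hτ hA) (hB n)).symm
      _ = (ρ.fst ⊗ₘ ρ.condKernel) (A ×ˢ B n) := by
          rw [ρ.disintegrate, Measure.map_apply hτid (hA.prod (hB n))]
          rfl
      _ = ∫⁻ s in A, ρ.condKernel s (B n) ∂(μ.map τ) := by
          rw [Measure.compProd_apply_prod hA (hB n), hfst]
  refine ⟨τ, hτ, ρ.condKernel, inferInstance, ?_⟩
  filter_upwards [ae_all_iff.2 hcoord] with t ht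
  exact ext_of_generate_finite _ hgen hpi (forall_mem_range.2 ht) (by simp only [measure_univ])

variable [TopologicalSpace S] [PolishSpace S] [MeasurableSpace S] [BorelSpace S] {c : S → S → ℝ}
  {μ : Measure E} [IsProbabilityMeasure μ] {κ ν : Kernel E S} [IsMarkovKernel κ] [IsMarkovKernel ν]

lemma StarCond.exists_optimal_kernel_of_standardBorel [StandardBorelSpace E] (hc : StarCond c)
    (hfin : ∫⁻ t, lipDist c (κ t) (ν t) ∂μ ≠ ⊤) :
    ∃ η : Kernel (E × S) S, IsMarkovKernel η ∧ ∀ᵐ t ∂μ, (κ ⊗ₖ η).snd t = ν t ∧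
      ∫⁻ p, ENNReal.ofReal (c p.1 p.2) ∂((κ ⊗ₖ η) t) = lipDist c (κ t) (ν t) := by
  obtain ⟨ρ, hfst, hsnd, hcost⟩ := hc.exists_measure_compProd hfin
  have : IsProbabilityMeasure ρ :=
    (Measure.isProbabilityMeasure_map_iff measurable_fst.aemeasurable).1
      (inferInstanceAs (IsProbabilityMeasure (μ ⊗ₘ κ)) |> hfst.symm.subst)
  have : Nonempty S := μ.nonempty_of_neZero.elim fun t => (κ t).nonempty_of_neZero
  have hρ : μ ⊗ₘ (κ ⊗ₖ ρ.condKernel) = ρ.map MeasurableEquiv.prodAssoc := by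
    rw [← Measure.compProd_assoc', ← hfst, ρ.disintegrate]
  have hmargin : (κ ⊗ₖ ρ.condKernel).snd =ᵐ[μ] ν := by
    refine Kernel.ae_eq_of_compProd_eq ?_
    rw [Kernel.snd_eq, Measure.compProd_map measurable_snd, hρ,
      Measure.map_map (by fun_prop) (by fun_prop), ← hsnd]
    rfl
  refine ⟨ρ.condKernel, inferInstance, hmargin.and (Filter.EventuallyEq.symm ?_)⟩
  have hcm := hc.measurable_ofReal
  refine ae_eq_of_ae_le_of_lintegral_le ?_ hfin (Measurable.lintegral_kernel hcm).aemeasurable ?_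
  · filter_upwards [hmargin] with t ht
    have hle := lipDist_map_fst_map_snd_le c ((κ ⊗ₖ ρ.condKernel) t)
    rwa [← Kernel.fst_apply, Kernel.fst_compProd, ← Kernel.snd_apply, ht] at hle
  · refine le_trans (le_of_eq ?_) hcost
    let cost : E × S × S → ℝ≥0∞ := fun q => ENNReal.ofReal (c q.2.1 q.2.2)
    have hcost : Measurable cost := hcm.comp measurable_snd
    rw [← Measure.lintegral_compProd (f := cost) hcost, hρ,
      lintegral_map hcost (MeasurableEquiv.measurable _)]
    rfl

lemma StarCond.exists_optimal_kernel (hc : StarCond c)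
    (hfin : ∫⁻ t, lipDist c (κ t) (ν t) ∂μ ≠ ⊤) :
    ∃ η : Kernel (E × S) S, IsMarkovKernel η ∧ ∀ᵐ t ∂μ, (κ ⊗ₖ η).snd t = ν t ∧
      ∫⁻ p, ENNReal.ofReal (c p.1 p.2) ∂((κ ⊗ₖ η) t) = lipDist c (κ t) (ν t) := by
  obtain ⟨τ, hτ, θ, hθ, hκν⟩ := exists_kernel_comap_ae_eq μ (κ ×ₖ ν)
  have hκ : ∀ᵐ t ∂μ, κ t = θ.fst (τ t) := hκν.mono fun t ht => by
    rw [Kernel.fst_apply, ← ht, ← Kernel.fst_apply, Kernel.fst_prod]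
  have hν : ∀ᵐ t ∂μ, ν t = θ.snd (τ t) := hκν.mono fun t ht => by
    rw [Kernel.snd_apply, ← ht, ← Kernel.snd_apply, Kernel.snd_prod]
  have hlip : ∫⁻ t, lipDist c (κ t) (ν t) ∂μ = ∫⁻ t, lipDist c (θ.fst (τ t)) (θ.snd (τ t)) ∂μ :=
    lintegral_congr_ae (by filter_upwards [hκ, hν] with t hκ hν; rw [hκ, hν])
  have := Measure.isProbabilityMeasure_map (μ := μ) hτ.aemeasurable
  obtain ⟨η, hη, hopt⟩ := hc.exists_optimal_kernel_of_standardBorel (μ := μ.map τ) (κ := θ.fst)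
    (ν := θ.snd) (ne_top_of_le_ne_top (hlip ▸ hfin) (lintegral_map_le _ _))
  refine ⟨η.comap (Prod.map τ id) (hτ.prodMap measurable_id), inferInstance, ?_⟩
  filter_upwards [hκ, hν, ae_of_ae_map hτ.aemeasurable hopt] with t hκ hν ht
  have hcomp : (κ ⊗ₖ η.comap (Prod.map τ id) (hτ.prodMap measurable_id)) t =
      (θ.fst ⊗ₖ η) (τ t) := by
    rw [Kernel.compProd_apply_eq_compProd_sectR, Kernel.compProd_apply_eq_compProd_sectR, hκ]
    rfl
  rw [Kernel.snd_apply, hcomp, hκ, hν]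
  exact ht

end OptimalKernel

section ConditionalDistribution

variable {Ω E S T : Type*} [mΩ : MeasurableSpace Ω] [mE : MeasurableSpace E] [MeasurableSpace S]
  [MeasurableSpace T] {P : Measure Ω} {V : Ω → E} {Z : Ω → S} {κ ν : Kernel E S}

lemma isRCD_comap_iff_hasCondDistrib [IsFiniteMeasure P] [IsMarkovKernel κ] (hV : Measurable V)
    (hZ : Measurable Z) :
    IsRCD P (mE.comap V) Z (κ ∘ V) ↔ HasCondDistrib Z V κ P := by
  have hVZ : Measurable fun ω => (V ω, Z ω) := hV.prodMk hZ
  have hrect {A : Set E} {B : Set S} (hA : MeasurableSet A) (hB : MeasurableSet B) :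
      (P (V ⁻¹' A ∩ Z ⁻¹' B) = ∫⁻ ω in V ⁻¹' A, κ (V ω) B ∂P) ↔
        P.map (fun ω => (V ω, Z ω)) (A ×ˢ B) = (P.map V ⊗ₘ κ) (A ×ˢ B) := by
    rw [Measure.map_apply hVZ (hA.prod hB), Measure.compProd_apply_prod hA hB,
      setLIntegral_map hA (κ.measurable_coe hB) hV, mk_preimage_prod]
  constructor
  · rintro ⟨-, -, h⟩
    exact ⟨hVZ.aemeasurable,
      Measure.ext_prod fun hA hB => (hrect hA hB).1 (h _ ⟨_, hA, rfl⟩ _ hB)⟩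
  · refine fun h => ⟨fun ω => inferInstanceAs (IsProbabilityMeasure (κ (V ω))),
      fun B hB => (κ.measurable_coe hB).comp (comap_measurable V), ?_⟩
    rintro _ ⟨A, hA, rfl⟩ B hB
    exact (hrect hA hB).2 (by rw [h.map_eq])

lemma hasCondDistrib_congr [SFinite P] [IsSFiniteKernel κ] [IsSFiniteKernel ν]
    (h : HasCondDistrib Z V κ P) (hκν : κ =ᵐ[P.map V] ν) :
    HasCondDistrib Z V ν P :=
  ⟨h.aemeasurable, h.map_eq.trans (Measure.compProd_congr hκν)⟩

lemma hasCondDistrib_prodMk [IsSFiniteKernel κ] {X : Ω → S} {Y : Ω → T} {η : Kernel (E × S) T}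
    [IsSFiniteKernel η] (hX : HasCondDistrib X V κ P)
    (hY : HasCondDistrib Y (fun ω => (V ω, X ω)) η P) :
    HasCondDistrib (fun ω => (X ω, Y ω)) V (κ ⊗ₖ η) P where
  aemeasurable := by fun_prop
  map_eq := by
    rw [← Measure.compProd_assoc', ← hX.map_eq, ← hY.map_eq,
      AEMeasurable.map_map_of_aemeasurable (by fun_prop) hY.aemeasurable]
    rfl

lemma lintegral_comp_eq_of_hasCondDistrib [SFinite P] [IsSFiniteKernel κ]
    (h : HasCondDistrib Z V κ P) {f : S → ℝ≥0∞} (hf : Measurable f) :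
    ∫⁻ ω, f (Z ω) ∂P = ∫⁻ t, ∫⁻ z, f z ∂(κ t) ∂(P.map V) := by
  have := h.lintegral_comp (f := f ∘ Prod.snd) (by fun_prop)
  rw [Measure.lintegral_compProd (by fun_prop)] at this
  exact this

lemma condExp_ae_eq_integral_of_hasCondDistrib [IsFiniteMeasure P]
    [StandardBorelSpace S] [Nonempty S] [IsFiniteKernel κ] (hV : Measurable V)
    (h : HasCondDistrib Z V κ P) {f : S → ℝ} (hf : Measurable f)
    (hint : Integrable (fun ω => f (Z ω)) P) :
    P[fun ω => f (Z ω) | mE.comap V] =ᵐ[P] fun ω => ∫ z, f z ∂(κ (V ω)) := by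
  have hκ := condDistrib_ae_eq_of_measure_eq_compProd V h.aemeasurable_snd h.map_eq
  filter_upwards [condExp_ae_eq_integral_condDistrib hV h.aemeasurable_snd hf.stronglyMeasurable
    hint, ae_of_ae_map hV.aemeasurable hκ] with ω hω hκω
  rw [hω, hκω]

lemma hasCondDistrib_of_indepFun [IsFiniteMeasure P] [IsFiniteKernel κ] {R : Type*}
    [MeasurableSpace R] {U : Ω → R} (hV : Measurable V) (hU : Measurable U) (hind : IndepFun V U P)
    {F : E × R → S} (hF : Measurable F) (hFκ : ∀ t, (P.map U).map (fun u => F (t, u)) = κ t) :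
    HasCondDistrib (fun ω => F (V ω, U ω)) V κ P where
  aemeasurable := by fun_prop
  map_eq := by
    have hG : Measurable fun p : E × R => (p.1, F p) := by fun_prop
    calc P.map (fun ω => (V ω, F (V ω, U ω)))
        = (P.map fun ω => (V ω, U ω)).map fun p => (p.1, F p) :=
          (Measure.map_map hG (hV.prodMk hU)).symm
      _ = ((P.map V).prod (P.map U)).map fun p => (p.1, F p) := by
          rw [(indepFun_iff_map_prod_eq_prod_map_map hV.aemeasurable hU.aemeasurable).1 hind]
      _ = P.map V ⊗ₘ κ := by
          ext s hs
          rw [Measure.map_apply hG hs, Measure.prod_apply (hG hs), Measure.compProd_apply hs]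
          refine lintegral_congr fun t => ?_
          rw [← hFκ, Measure.map_apply (by fun_prop) (measurable_prodMk_left hs)]
          rfl

lemma exists_measurable_map_eq_restrict_Icc [StandardBorelSpace S] [Nonempty S] (κ : Kernel E S)
    [IsMarkovKernel κ] :
    ∃ F : E × ℝ → S, Measurable F ∧
      ∀ t, (volume.restrict (Icc (0 : ℝ) 1)).map (fun u => F (t, u)) = κ t := by
  obtain ⟨G, hG, hGκ⟩ := κ.exists_measurable_map_eq_unitInterval
  let F : E × ℝ → S := fun p => G p.1 (projIcc 0 1 zero_le_one p.2)
  have hF : Measurable F :=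
    hG.comp (measurable_fst.prodMk
      ((continuous_projIcc (h := zero_le_one)).measurable.comp measurable_snd))
  refine ⟨F, hF, fun t => ?_⟩
  have hI : (volume : Measure unitInterval).map Subtype.val = volume.restrict (Icc (0 : ℝ) 1) :=
    unitInterval.measurePreserving_coe.map_eq
  rw [← hI, Measure.map_map (by fun_prop) measurable_subtype_coe, ← hGκ t]
  congr 1 with u
  simp only [F, Function.comp_apply, projIcc_val]

lemma exists_hasCondDistrib_of_uniform [IsFiniteMeasure P]
    [StandardBorelSpace S] [Nonempty S] (κ : Kernel E S) [IsMarkovKernel κ]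
    {U : Ω → ℝ} (hV : Measurable V) (hU : Measurable U)
    (hunif : P.map U = volume.restrict (Icc (0 : ℝ) 1)) (hind : IndepFun V U P) :
    ∃ Y : Ω → S, Measurable[MeasurableSpace.comap (fun ω => (V ω, U ω)) inferInstance] Y ∧
      HasCondDistrib Y V κ P := by
  obtain ⟨F, hF, hFκ⟩ := exists_measurable_map_eq_restrict_Icc κ
  exact ⟨_, hF.comp (comap_measurable _),
    hasCondDistrib_of_indepFun hV hU hind hF (hunif ▸ hFκ)⟩

end ConditionalDistribution

section Coupling

variable {Ω E S : Type*} [mΩ : MeasurableSpace Ω] [mE : MeasurableSpace E] [TopologicalSpace S]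
  [PolishSpace S] [MeasurableSpace S] [BorelSpace S] {P : Measure Ω} [IsProbabilityMeasure P]
  {c : S → S → ℝ} {V : Ω → E} {X Y : Ω → S} {U : Ω → ℝ} {κ ν : Kernel E S}

lemma StarCond.lintegral_lipDist_ne_top [IsMarkovKernel κ] [IsMarkovKernel ν] (hc : StarCond c)
    {μ : Measure E} (x₀ : S)
    (hκ : ∫⁻ t, ∫⁻ x, ENNReal.ofReal (c x x₀) ∂(κ t) ∂μ ≠ ⊤)
    (hν : ∫⁻ t, ∫⁻ x, ENNReal.ofReal (c x x₀) ∂(ν t) ∂μ ≠ ⊤) :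
    ∫⁻ t, lipDist c (κ t) (ν t) ∂μ ≠ ⊤ := by
  refine ne_top_of_le_ne_top (ENNReal.add_ne_top.2 ⟨hκ, hν⟩) ?_
  have hcx₀ : Measurable fun x => ENNReal.ofReal (c x x₀) :=
    hc.measurable_ofReal.comp measurable_prodMk_right
  rw [← lintegral_add_left hcx₀.lintegral_kernel]
  exact lintegral_mono fun t => hc.lipDist_le_lintegral_add_lintegral x₀ (κ t) (ν t)

lemma StarCond.condExp_ae_eq_toReal_lintegral (hc : StarCond c) (hV : Measurable V)
    {π : Kernel E (S × S)} [IsMarkovKernel π] (hXY : HasCondDistrib (fun ω => (X ω, Y ω)) V π P)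
    (hfin : ∫⁻ t, ∫⁻ p, ENNReal.ofReal (c p.1 p.2) ∂(π t) ∂(P.map V) ≠ ⊤) :
    P[fun ω => c (X ω) (Y ω) | mE.comap V] =ᵐ[P]
      fun ω => (∫⁻ p, ENNReal.ofReal (c p.1 p.2) ∂(π (V ω))).toReal := by
  have hcm : Measurable fun p : S × S => c p.1 p.2 := by
    simpa only [ENNReal.toReal_ofReal (hc.nonneg _ _)] using hc.measurable_ofReal.ennreal_toReal
  have hcost : ∫⁻ ω, ENNReal.ofReal (c (X ω) (Y ω)) ∂P ≠ ⊤ := by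
    rwa [← lintegral_comp_eq_of_hasCondDistrib hXY hc.measurable_ofReal] at hfin
  have hint : Integrable (fun ω => c (X ω) (Y ω)) P :=
    (lintegral_ofReal_ne_top_iff_integrable
      (hcm.comp_aemeasurable hXY.aemeasurable_snd).aestronglyMeasurable
      (.of_forall fun ω => hc.nonneg _ _)).1 hcost
  have : Nonempty (S × S) := P.nonempty_of_neZero.map fun ω => (X ω, Y ω)
  filter_upwards [condExp_ae_eq_integral_of_hasCondDistrib hV hXY hcm hint] with ω hω
  rw [hω, integral_eq_lintegral_of_nonneg_ae (.of_forall fun p => hc.nonneg _ _)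
    hcm.aestronglyMeasurable]

lemma StarCond.exists_hasCondDistrib_condExp_eq_lipDist [IsMarkovKernel κ] [IsMarkovKernel ν]
    (hc : StarCond c) (hV : Measurable V) (hX : Measurable X) (hκ : HasCondDistrib X V κ P)
    (hU : Measurable U) (hunif : P.map U = volume.restrict (Icc (0 : ℝ) 1))
    (hind : IndepFun (fun ω => (V ω, X ω)) U P)
    (hfin : ∫⁻ t, lipDist c (κ t) (ν t) ∂(P.map V) ≠ ⊤) :
    ∃ Y : Ω → S, Measurable[MeasurableSpace.comap (fun ω => ((V ω, X ω), U ω)) inferInstance] Y ∧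
      HasCondDistrib Y V ν P ∧ P[fun ω => c (X ω) (Y ω) | mE.comap V] =ᵐ[P]
        fun ω => (lipDist c (κ (V ω)) (ν (V ω))).toReal := by
  have := Measure.isProbabilityMeasure_map (μ := P) hV.aemeasurable
  have : Nonempty S := P.nonempty_of_neZero.map X
  obtain ⟨η, hη, hopt⟩ := hc.exists_optimal_kernel hfin
  obtain ⟨Y, hYm, hY⟩ := exists_hasCondDistrib_of_uniform η (hV.prodMk hX) hU hunif hind
  have hXY := hasCondDistrib_prodMk hκ hY
  have hcost := hopt.mono fun t ht => ht.2
  refine ⟨Y, hYm, hasCondDistrib_congr hXY.snd (hopt.mono fun t ht => ht.1), ?_⟩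
  filter_upwards [hc.condExp_ae_eq_toReal_lintegral hV hXY ((lintegral_congr_ae hcost).trans_ne
    hfin), ae_of_ae_map hV.aemeasurable hcost] with ω hω hωcost
  rw [hω, hωcost]

lemma StarCond.exists_isRCD_comap_condExp_eq_lipDist [IsMarkovKernel κ] [IsMarkovKernel ν]
    (hc : StarCond c) (hV : Measurable V) (hX : Measurable X)
    (hκ : IsRCD P (mE.comap V) X (κ ∘ V)) (x₀ : S)
    (hXint : ∫⁻ x, ENNReal.ofReal (c x x₀) ∂(P.map X) < ⊤)
    (hνint : ∫⁻ ω, ∫⁻ x, ENNReal.ofReal (c x x₀) ∂(ν (V ω)) ∂P < ⊤)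
    (hU : Measurable U) (hunif : P.map U = volume.restrict (Icc (0 : ℝ) 1))
    (hind : Indep (MeasurableSpace.comap U inferInstance)
      (MeasurableSpace.comap X inferInstance ⊔ mE.comap V) P) :
    ∃ Y : Ω → S, Measurable[MeasurableSpace.comap U inferInstance ⊔
        MeasurableSpace.comap X inferInstance ⊔ mE.comap V] Y ∧
      IsRCD P (mE.comap V) Y (ν ∘ V) ∧ P[fun ω => c (X ω) (Y ω) | mE.comap V] =ᵐ[P]
        fun ω => (lipDist c (κ (V ω)) (ν (V ω))).toReal := by
  have hσ : MeasurableSpace.comap (fun ω => (V ω, X ω)) inferInstance =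
      MeasurableSpace.comap X inferInstance ⊔ mE.comap V :=
    (MeasurableSpace.comap_prodMk V X).trans (sup_comm _ _)
  have hσU : MeasurableSpace.comap (fun ω => ((V ω, X ω), U ω)) inferInstance =
      MeasurableSpace.comap U inferInstance ⊔ MeasurableSpace.comap X inferInstance ⊔
        mE.comap V := by
    rw [sup_assoc, ← hσ, sup_comm]
    exact MeasurableSpace.comap_prodMk _ U
  have hcx₀ : Measurable fun x => ENNReal.ofReal (c x x₀) :=
    hc.measurable_ofReal.comp measurable_prodMk_right
  rw [isRCD_comap_iff_hasCondDistrib hV hX] at hκ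
  rw [lintegral_map hcx₀ hX, lintegral_comp_eq_of_hasCondDistrib hκ hcx₀] at hXint
  rw [← lintegral_map hcx₀.lintegral_kernel hV] at hνint
  obtain ⟨Y, hYm, hY, hcond⟩ := hc.exists_hasCondDistrib_condExp_eq_lipDist (ν := ν) hV hX hκ hU
    hunif ((IndepFun_iff_Indep _ _ _).2 (hσ ▸ hind.symm))
    (hc.lintegral_lipDist_ne_top x₀ hXint.ne hνint.ne)
  have hYmeas := hYm.mono ((hV.prodMk hX).prodMk hU).comap_le le_rfl
  exact ⟨Y, hσU ▸ hYm, (isRCD_comap_iff_hasCondDistrib hV hYmeas).2 hY, hcond⟩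

end Coupling

/-- **General coupling theorem**: if `Ω` is rich enough (there is a uniform random
variable `U` independent of `σ(X) ∨ ℳ`), and `ω ↦ Q_ω` is an `ℳ`-measurable family of
probability measures with the cost integrability, then there is a
`σ(U) ∨ σ(X) ∨ ℳ`-measurable random variable `Y` such that `Q` is a regular conditional
distribution of `Y` given `ℳ` and, `P`-a.s.,
`E[c(X,Y) | ℳ] = sup_{f ∈ Lip_c} |∫ f dP_{X|ℳ} - ∫ f dQ_·|`. -/
theorem general_coupling
    {S : Type*} [TopologicalSpace S] [PolishSpace S] [MeasurableSpace S] [BorelSpace S]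
    {Ω : Type*} [mΩ : MeasurableSpace Ω] (P : Measure Ω) [IsProbabilityMeasure P]
    (c : S → S → ℝ) (hc0 : ∀ x y, 0 ≤ c x y) (hstar : StarCond c)
    (X : Ω → S) (hX : Measurable X)
    (x₀ : S) (hXint : ∫⁻ x, ENNReal.ofReal (c x x₀) ∂(P.map X) < ⊤)
    (U : Ω → ℝ) (hUmeas : Measurable U)
    (hUunif : P.map U = volume.restrict (Set.Icc (0:ℝ) 1))
    (M : MeasurableSpace Ω) (hM : M ≤ mΩ)
    (hUindep : Indep (MeasurableSpace.comap U inferInstance)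
      (MeasurableSpace.comap X inferInstance ⊔ M) P)
    (κX : Ω → Measure S) (hκX : IsRCD P M X κX)
    (Q : Ω → Measure S) (hQprob : ∀ ω, IsProbabilityMeasure (Q ω))
    (hQmeas : ∀ B : Set S, MeasurableSet B → Measurable[M] (fun ω => Q ω B))
    (hQint : ∫⁻ ω, ∫⁻ x, ENNReal.ofReal (c x x₀) ∂(Q ω) ∂P < ⊤) :
    ∃ Y : Ω → S,
      Measurable[MeasurableSpace.comap U inferInstance ⊔
        MeasurableSpace.comap X inferInstance ⊔ M] Y ∧
      IsRCD P M Y Q ∧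
      ∀ᵐ ω ∂P, (P[fun ω' => c (X ω') (Y ω') | M]) ω =
        (⨆ u ∈ LipC c,
          ENNReal.ofReal |∫ x, u x ∂(κX ω) - ∫ x, u x ∂(Q ω)|).toReal := by
  let κ : Kernel[M] Ω S := ⟨κX, Measure.measurable_of_measurable_coe κX hκX.2.1⟩
  let ν : Kernel[M] Ω S := ⟨Q, Measure.measurable_of_measurable_coe Q hQmeas⟩
  have : IsMarkovKernel κ := ⟨hκX.1⟩
  have : IsMarkovKernel ν := ⟨hQprob⟩
  have hid : M.comap id = M := MeasurableSpace.comap_id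
  have := hstar.exists_isRCD_comap_condExp_eq_lipDist (mΩ := mΩ) (mE := M) (κ := κ) (ν := ν)
    (measurable_id.mono hM le_rfl) hX (hid.symm ▸ hκX) x₀ hXint hQint hUmeas hUunif
    (hid.symm ▸ hUindep)
  rwa [hid] at this

end
end

section
/- Let S be a Polish space, c : S × S → [0,∞] lower semicontinuous, and μ, ν Borel probability measures on S. Then the infimum inf_{π ∈ D(μ,ν)} ∫_{S×S} c dπ is attained: there exists a coupling π* ∈ D(μ,ν) with ∫ c dπ* = inf_{π ∈ D(μ,ν)} ∫ c dπ. -/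
open MeasureTheory ProbabilityTheory ENNReal Set

noncomputable section

/-!
The direct method: the couplings of `μ` and `ν` form a weakly compact set, and integration against
`c` is weakly lower semicontinuous. Compactness is Prokhorov's theorem, since tightness passes from
the marginals to the couplings. Lower semicontinuity follows from the layer-cake formula
`∫ c dπ = ∫₀^∞ π {c > t} dt`: each `{c > t}` is open, so the portmanteau theorem bounds the
integrand and Fatou's lemma the integral.
-/

open Filter TopologicalSpace

section LowerSemicontinuity

variable {X : Type*} [MeasurableSpace X]

theorem lintegral_eq_lintegral_meas_ofReal_lt {μ : Measure X} {f : X → ℝ≥0∞}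
    (hf : AEMeasurable f μ) :
    ∫⁻ x, f x ∂μ = ∫⁻ t in Ioi (0 : ℝ), μ {x | ENNReal.ofReal t < f x} := by
  by_cases hinf : μ {x | f x = ∞} = 0
  · have hfin : ∀ᵐ x ∂μ, f x ≠ ∞ := measure_eq_zero_iff_ae_notMem.mp hinf
    calc ∫⁻ x, f x ∂μ = ∫⁻ x, ENNReal.ofReal (f x).toReal ∂μ :=
          lintegral_congr_ae (hfin.mono fun x hx => (ofReal_toReal hx).symm)
      _ = ∫⁻ t in Ioi (0 : ℝ), μ {x | t < (f x).toReal} :=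
          lintegral_eq_lintegral_meas_lt μ (ae_of_all μ fun _ => toReal_nonneg) hf.ennreal_toReal
      _ = ∫⁻ t in Ioi (0 : ℝ), μ {x | ENNReal.ofReal t < f x} :=
          setLIntegral_congr_fun measurableSet_Ioi fun t ht => measure_congr <|
            hfin.mono fun x hx => propext (ofReal_lt_iff_lt_toReal (le_of_lt ht) hx).symm
  · have htop : ∫⁻ _ in Ioi (0 : ℝ), μ {x | f x = ∞} = ∞ := by
      rw [setLIntegral_const, Real.volume_Ioi, mul_top hinf]
    rw [lintegral_eq_top_of_measure_eq_top_ne_zero hf hinf, eq_comm, ← top_le_iff, ← htop]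
    gcongr with t x
    exact fun hx => hx ▸ ofReal_lt_top

variable [TopologicalSpace X] [OpensMeasurableSpace X] {c : X → ℝ≥0∞}

theorem lintegral_le_liminf_lintegral_of_lowerSemicontinuous {ι : Type*} {L : Filter ι}
    [L.IsCountablyGenerated] {μ : Measure X} {μs : ι → Measure X} (hc : LowerSemicontinuous c)
    (h_opens : ∀ G, IsOpen G → μ G ≤ L.liminf fun i => μs i G) :
    ∫⁻ x, c x ∂μ ≤ L.liminf fun i => ∫⁻ x, c x ∂μs i := by
  simp only [lintegral_eq_lintegral_meas_ofReal_lt hc.measurable.aemeasurable]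
  calc ∫⁻ t in Ioi (0 : ℝ), μ {x | ENNReal.ofReal t < c x}
      ≤ ∫⁻ t in Ioi (0 : ℝ), L.liminf fun i => μs i {x | ENNReal.ofReal t < c x} :=
        lintegral_mono fun t => h_opens _ (hc.isOpen_preimage _)
    _ ≤ L.liminf fun i => ∫⁻ t in Ioi (0 : ℝ), μs i {x | ENNReal.ofReal t < c x} :=
        lintegral_liminf_le fun i => Antitone.measurable fun _ _ hst =>
          measure_mono fun _ hx => (ofReal_le_ofReal hst).trans_lt hx

theorem lowerSemicontinuous_lintegral_probabilityMeasure [PseudoMetrizableSpace X]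
    [SeparableSpace X] (hc : LowerSemicontinuous c) :
    LowerSemicontinuous fun P : ProbabilityMeasure X => ∫⁻ x, c x ∂(P : Measure X) :=
  lowerSemicontinuous_iff_le_liminf.mpr fun _ =>
    lintegral_le_liminf_lintegral_of_lowerSemicontinuous hc fun _ hG =>
      ProbabilityMeasure.le_liminf_measure_open_of_tendsto tendsto_id hG

end LowerSemicontinuity

theorem isClosed_setOfPred_probabilityMeasure_map_eq {X Y : Type*}
    [TopologicalSpace X] [MeasurableSpace X] [OpensMeasurableSpace X]
    [TopologicalSpace Y] [MeasurableSpace Y] [BorelSpace Y] [HasOuterApproxClosed Y]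
    {f : X → Y} (hf : Continuous f) (ν : Measure Y) [IsProbabilityMeasure ν] :
    IsClosed {P : ProbabilityMeasure X | (P : Measure X).map f = ν} := by
  let νp : ProbabilityMeasure Y := ⟨ν, inferInstance⟩
  convert (isClosed_singleton (x := νp)).preimage (ProbabilityMeasure.continuous_map hf) using 1
  ext P
  exact ⟨fun h => Subtype.ext h, congrArg Subtype.val⟩

section Couplings

variable {S : Type*} [MeasurableSpace S] {μ ν : Measure S}

theorem prod_mem_couplings [IsProbabilityMeasure μ] [IsProbabilityMeasure ν] :
    μ.prod ν ∈ Couplings μ ν :=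
  ⟨inferInstance, Measure.fst_prod, Measure.snd_prod⟩

theorem isTightMeasureSet_couplings [TopologicalSpace S] (hμ : IsTightMeasureSet {μ})
    (hν : IsTightMeasureSet {ν}) : IsTightMeasureSet (Couplings μ ν) :=
  .prodMk (hμ.subset (image_subset_iff.mpr fun _ hπ => hπ.2.1))
    (hν.subset (image_subset_iff.mpr fun _ hπ => hπ.2.2))

variable [TopologicalSpace S] [SecondCountableTopology S] [BorelSpace S]
  [IsProbabilityMeasure μ] [IsProbabilityMeasure ν]

theorem isClosed_setOfPred_mem_couplings [HasOuterApproxClosed S] :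
    IsClosed {P : ProbabilityMeasure (S × S) | (P : Measure (S × S)) ∈ Couplings μ ν} := by
  convert (isClosed_setOfPred_probabilityMeasure_map_eq continuous_fst μ).inter
    (isClosed_setOfPred_probabilityMeasure_map_eq continuous_snd ν) using 1
  ext P
  exact and_iff_right P.2

variable [MetrizableSpace S]

theorem isCompact_setOfPred_mem_couplings (hμ : IsTightMeasureSet {μ})
    (hν : IsTightMeasureSet {ν}) :
    IsCompact {P : ProbabilityMeasure (S × S) | (P : Measure (S × S)) ∈ Couplings μ ν} := by
  rw [← isClosed_setOfPred_mem_couplings.closure_eq]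
  refine isCompact_closure_of_isTightMeasureSet ((isTightMeasureSet_couplings hμ hν).subset ?_)
  rintro _ ⟨P, hP, rfl⟩
  exact hP

theorem exists_optimal_coupling_general {c : S × S → ℝ≥0∞} (hc : LowerSemicontinuous c)
    (hμ : IsTightMeasureSet {μ}) (hν : IsTightMeasureSet {ν}) :
    ∃ π ∈ Couplings μ ν,
      ∫⁻ p, c p ∂π = ⨅ π' ∈ Couplings μ ν, ∫⁻ p, c p ∂π' := by
  obtain ⟨P, hP, hmin⟩ := LowerSemicontinuousOn.exists_isMinOn
    ⟨⟨μ.prod ν, inferInstance⟩, prod_mem_couplings⟩ (isCompact_setOfPred_mem_couplings hμ hν)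
    ((lowerSemicontinuous_lintegral_probabilityMeasure hc).lowerSemicontinuousOn _)
  have hle : ∀ π ∈ Couplings μ ν, ∫⁻ p, c p ∂(P : Measure (S × S)) ≤ ∫⁻ p, c p ∂π :=
    fun π hπ => isMinOn_iff.mp hmin ⟨π, hπ.1⟩ hπ
  exact ⟨P, hP, le_antisymm (le_iInf₂ hle) (iInf₂_le (P : Measure (S × S)) hP)⟩

end Couplings

/-- **Existence of an optimal coupling**: for a lower semicontinuous cost
`c : S × S → [0,∞]` and Borel probability measures `μ, ν` on a Polish space `S`, the
infimum `inf_{π ∈ D(μ,ν)} ∫ c dπ` is attained. -/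
theorem exists_optimal_coupling
    {S : Type*} [TopologicalSpace S] [PolishSpace S] [MeasurableSpace S] [BorelSpace S]
    (c : S × S → ℝ≥0∞) (hc : LowerSemicontinuous c)
    (μ ν : Measure S) [IsProbabilityMeasure μ] [IsProbabilityMeasure ν] :
    ∃ π ∈ Couplings μ ν,
      ∫⁻ p, c p ∂π = ⨅ π' ∈ Couplings μ ν, ∫⁻ p, c p ∂π' :=
  exists_optimal_coupling_general hc isTightMeasureSet_singleton isTightMeasureSet_singleton

end
end
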